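/- Let A → B be a faithfully flat homomorphism of commutative rings, and let M be an A-module of finite projective dimension. Then the projective dimension of the B-module B ⊗_A M equals the projective dimension of the A-module M. -/

import Mathlib

/-!
STATEMENT 3: Let A → B be a faithfully flat homomorphism of commutative rings, and let M
be an A-module of finite projective dimension.  Then the projective dimension of the
B-module B ⊗_A M equals the projective dimension of the A-module M.
-/

open CategoryTheory

universe u

/-- `Ext_A^i(M, N)` as an `A`-module. -/
noncomputable abbrev extGroup (A : Type u) [CommRing A] (M N : ModuleCat.{u} A) (i : ℕ) :
    ModuleCat A :=
  ((Ext A (ModuleCat.{u} A) i).obj (Opposite.op M)).obj N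

/-- The projective dimension of an `A`-module `M`, defined as the least `n : ℕ∞` such that
`Ext_A^i(M, N) = 0` for every `A`-module `N` and every `i > n` (and `∞` if no such `n` exists). -/
noncomputable def projDim (A : Type u) [CommRing A] (M : ModuleCat.{u} A) : ℕ∞ :=
  sInf {n : ℕ∞ | ∀ (N : ModuleCat.{u} A) (i : ℕ), n < (i : ℕ∞) →
    Subsingleton (extGroup A M N i)}

/-!
Let `0 → K → F → M → 0` be exact with `F` free and `B ⊗ M` projective, so that `B ⊗ K → B ⊗ F` has
a retraction. A finite linear system over `A` with constants in `K` that is solvable in `B ⊗ K` is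
solvable in `K`, and unknowns that vanish in the given solution can be kept zero. The base-changed
retraction sends each basis vector of `F` to a sum of tensors involving only finitely many elements
of `K`. If a partial retraction over `A` fixes these elements, its defect kills that sum, so the
value already found can be kept while finitely many new identities are imposed. Countably many such
steps absorb the supports of the vectors involved, and Zorn's lemma then gives a retraction `F → K`.
Hence projectivity descends along `A → B`, and dimension shifting along presentations by free
modules compares the projective dimensions.
-/

open scoped TensorProduct

section LinearCombination

variable {A N ι : Type*} [Semiring A] [AddCommMonoid N] [Module A N] {s t : ι → N} {v : ι →₀ A}

theorem linearCombination_congr_of_mem_supported {J : Set ι} (h : Set.EqOn s t J)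
    (hv : v ∈ Finsupp.supported A A J) :
    Finsupp.linearCombination A s v = Finsupp.linearCombination A t v :=
  Finsupp.sum_congr fun _ hi => congrArg _ (h (hv hi))

theorem linearCombination_eq_sum_of_forall_notMem {G : Finset ι}
    (h : ∀ i ∈ v.support, i ∉ G → s i = 0) :
    Finsupp.linearCombination A s v = ∑ i : G, v i • s i := by
  rw [Finset.sum_coe_sort G fun i => v i • s i]
  refine Finset.sum_congr_of_eq_on_inter (fun i hi hiG => ?_) (fun i _ hi => ?_) fun _ _ _ => rfl
  · simp [h i hi hiG]
  · simp [Finsupp.notMem_support_iff.1 hi]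

end LinearCombination

section LinearSystems

variable {A B N P ι κ : Type*} [CommRing A] [Ring B] [Algebra A B] [Module.FaithfullyFlat A B]
  [AddCommGroup N] [Module A N] [AddCommGroup P] [Module A P]

theorem mem_range_of_one_tmul_mem_range_lTensor {φ : N →ₗ[A] P} {y : P}
    (h : (1 : B) ⊗ₜ[A] y ∈ LinearMap.range (φ.lTensor B)) : y ∈ LinearMap.range φ := by
  obtain ⟨w, hw⟩ := h
  have hzero : (1 : B) ⊗ₜ[A] (LinearMap.range φ).mkQ y = 0 := by
    rw [← LinearMap.lTensor_tmul, ← hw, ← LinearMap.comp_apply, ← LinearMap.lTensor_comp,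
      LinearMap.range_mkQ_comp, LinearMap.lTensor_zero, LinearMap.zero_apply]
  rwa [Module.FaithfullyFlat.one_tmul_eq_zero_iff, Submodule.mkQ_apply,
    Submodule.Quotient.mk_eq_zero] at hzero

theorem exists_sum_smul_eq_of_tensorProduct [Fintype ι] [Finite κ] {c : κ → ι → A} {y : κ → N}
    {z : ι → B ⊗[A] N} (hz : ∀ k, ∑ i, c k i • z i = 1 ⊗ₜ y k) :
    ∃ x : ι → N, ∀ k, ∑ i, c k i • x i = y k := by
  classical
  have := Fintype.ofFinite κ
  let φ : (ι → N) →ₗ[A] (κ → N) := LinearMap.pi fun k => ∑ i, c k i • LinearMap.proj i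
  have hφ (x : ι → N) (k : κ) : φ x k = ∑ i, c k i • x i := by simp [φ]
  let eι := TensorProduct.piRight A A B fun _ : ι => N
  let eκ := TensorProduct.piRight A A B fun _ : κ => N
  have hφB (w : B ⊗[A] (ι → N)) (k : κ) : eκ (φ.lTensor B w) k = ∑ i, c k i • eι w i := by
    induction w with
    | zero => simp
    | tmul b x => simp [eι, eκ, hφ, TensorProduct.tmul_sum, TensorProduct.tmul_smul]
    | add w w' hw hw' => simp [hw, hw', Finset.sum_add_distrib]
  have hy : (1 : B) ⊗ₜ[A] y ∈ LinearMap.range (φ.lTensor B) :=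
    ⟨eι.symm z, eκ.injective <| funext fun k => by simp [hφB, hz, eκ]⟩
  obtain ⟨x, rfl⟩ := mem_range_of_one_tmul_mem_range_lTensor hy
  exact ⟨x, fun k => (hφ x k).symm⟩

theorem exists_linearCombination_eq_of_tensorProduct [Finite κ] {v : κ → ι →₀ A} {y : κ → N}
    {z : ι → B ⊗[A] N} (hz : ∀ k, Finsupp.linearCombination A z (v k) = 1 ⊗ₜ y k) :
    ∃ x : ι → N, (∀ i, z i = 0 → x i = 0) ∧
      ∀ k, Finsupp.linearCombination A x (v k) = y k := by
  classical
  have := Fintype.ofFinite κ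
  let G : Finset ι := {i ∈ Finset.univ.biUnion fun k => (v k).support | z i ≠ 0}
  have hG (k : κ) (i : ι) (hi : i ∈ (v k).support) (hiG : i ∉ G) : z i = 0 := by
    by_contra hzi
    exact hiG (Finset.mem_filter.2 ⟨Finset.mem_biUnion.2 ⟨k, Finset.mem_univ k, hi⟩, hzi⟩)
  obtain ⟨x, hx⟩ := exists_sum_smul_eq_of_tensorProduct (c := fun k (i : G) => v k i)
    fun k => (linearCombination_eq_sum_of_forall_notMem (hG k)).symm.trans (hz k)
  let x' : ι → N := Function.extend Subtype.val x 0
  have hx' (i : ι) (hi : i ∉ G) : x' i = 0 := Function.extend_apply' _ _ _ (by simpa using hi)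
  refine ⟨x', fun i hi => hx' i (by simp [G, hi]), fun k => ?_⟩
  rw [linearCombination_eq_sum_of_forall_notMem fun i _ => hx' i, ← hx k]
  simp only [x', Subtype.val_injective.extend_apply]

end LinearSystems

/-- Values in `K` for the basis vectors of `ι →₀ A` indexed by `carrier`, meant to be extended to a
retraction of `D : K → (ι →₀ A)`. The set `T i` is the finite set of elements of `K` on which the
identity `retraction ∘ D = id` is demanded once `i` belongs to `carrier`; `toFun` takes arbitrary
values outside `carrier`, although they may enter the sums `linearCombination A toFun (D k)`. -/
structure PartialRetraction {A K ι : Type*} [Semiring A] [AddCommMonoid K] [Module A K]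
    (D : K →ₗ[A] ι →₀ A) (T : ι → Finset K) where
  carrier : Set ι
  toFun : ι → K
  retracts : ∀ i ∈ carrier, ∀ k ∈ T i, Finsupp.linearCombination A toFun (D k) = k

namespace PartialRetraction

section Order

variable {A K ι : Type*} [Semiring A] [AddCommMonoid K] [Module A K]
  {D : K →ₗ[A] ι →₀ A} {T : ι → Finset K}

instance : Preorder (PartialRetraction D T) where
  le p q := p.carrier ⊆ q.carrier ∧ Set.EqOn p.toFun q.toFun p.carrier
  le_refl p := ⟨subset_rfl, Set.eqOn_refl _ _⟩
  le_trans _ _ _ hpq hqr := ⟨hpq.1.trans hqr.1, hpq.2.trans (hqr.2.mono hpq.1)⟩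

/-- The indices in the carrier that demand an identity involving values outside the carrier. These
identities are lost by an arbitrary extension of `p`, so they have to be arranged again. -/
def frontier (p : PartialRetraction D T) : Set ι :=
  {i ∈ p.carrier | ∃ k ∈ T i, D k ∉ Finsupp.supported A A p.carrier}

theorem mem_supported_of_notMem_frontier {p : PartialRetraction D T} {i : ι}
    (hi : i ∈ p.carrier) (hi' : i ∉ p.frontier) {k : K} (hk : k ∈ T i) :
    D k ∈ Finsupp.supported A A p.carrier := by
  by_contra h
  exact hi' ⟨hi, k, hk, h⟩

theorem exists_eqOn_of_directedOn {c : Set (PartialRetraction D T)} (hc : DirectedOn (· ≤ ·) c) :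
    ∃ s : ι → K, ∀ p ∈ c, Set.EqOn p.toFun s p.carrier := by
  have hglue (i : ι) : ∃ x : K, ∀ p ∈ c, i ∈ p.carrier → p.toFun i = x := by
    by_cases hi : ∃ p ∈ c, i ∈ p.carrier
    · obtain ⟨p, hp, hip⟩ := hi
      refine ⟨p.toFun i, fun q hq hiq => ?_⟩
      obtain ⟨r, -, hpr, hqr⟩ := hc p hp q hq
      exact (hqr.2 hiq).trans (hpr.2 hip).symm
    · exact ⟨0, fun p hp hip => (hi ⟨p, hp, hip⟩).elim⟩
  choose s hs using hglue
  exact ⟨s, fun p hp i hi => hs i p hp hi⟩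

theorem exists_frontier_eq_empty_of_directedOn {c : Set (PartialRetraction D T)}
    (hc : DirectedOn (· ≤ ·) c)
    (hsupp : ∀ p ∈ c, ∃ q ∈ c, ∀ i ∈ p.carrier, ∀ k ∈ T i,
      D k ∈ Finsupp.supported A A q.carrier) :
    ∃ m : PartialRetraction D T, m.frontier = ∅ ∧ ∀ p ∈ c, p ≤ m := by
  obtain ⟨s, hs⟩ := exists_eqOn_of_directedOn hc
  have hlocal (i : ι) (hi : i ∈ ⋃ p ∈ c, p.carrier) :
      ∃ r ∈ c, i ∈ r.carrier ∧ ∀ k ∈ T i, D k ∈ Finsupp.supported A A r.carrier := by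
    obtain ⟨p, hp, hip⟩ := Set.mem_iUnion₂.1 hi
    obtain ⟨q, hq, hpq⟩ := hsupp p hp
    obtain ⟨r, hr, hpr, hqr⟩ := hc p hp q hq
    exact ⟨r, hr, hpr.1 hip, fun k hk => Finsupp.supported_mono hqr.1 (hpq i hip k hk)⟩
  refine ⟨⟨⋃ p ∈ c, p.carrier, s, fun i hi k hk => ?_⟩, ?_, fun p hp =>
    ⟨Set.subset_biUnion_of_mem (u := carrier) hp, hs p hp⟩⟩
  · obtain ⟨r, hr, hir, hrk⟩ := hlocal i hi
    rw [← linearCombination_congr_of_mem_supported (hs r hr) (hrk k hk), r.retracts i hir k hk]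
  · refine Set.eq_empty_of_forall_notMem fun i ⟨hi, k, hk, hDk⟩ => hDk ?_
    obtain ⟨r, hr, -, hrk⟩ := hlocal i hi
    exact Finsupp.supported_mono (Set.subset_biUnion_of_mem (u := carrier) hr) (hrk k hk)

end Order

section FaithfullyFlat

variable {A B K ι : Type*} [CommRing A] [Ring B] [Algebra A B] [Module.FaithfullyFlat A B]
  [AddCommGroup K] [Module A K] {D : K →ₗ[A] ι →₀ A} {T : ι → Finset K} {r : ι → B ⊗[A] K}
  (hr : ∀ k, Finsupp.linearCombination A r (D k) = 1 ⊗ₜ k)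
  (hT : ∀ (i : ι) (y : K →ₗ[A] K), (∀ k ∈ T i, y k = 0) → y.lTensor B (r i) = 0)

include hr hT

theorem exists_le_carrier_eq_union (p : PartialRetraction D T) (hp : p.frontier.Finite) {F : Set ι}
    (hF : F.Finite) : ∃ q, p ≤ q ∧ q.carrier = p.carrier ∪ F := by
  -- The base-changed defect kills `r i` for `i` in the carrier, so the correction vanishes there.
  let defect : K →ₗ[A] K := LinearMap.id - Finsupp.linearCombination A p.toFun ∘ₗ D
  have hdefect (k : K) : defect k = k - Finsupp.linearCombination A p.toFun (D k) := rfl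
  have hdefect_r (i : ι) (hi : i ∈ p.carrier) : defect.lTensor B (r i) = 0 :=
    hT i defect fun k hk => by rw [hdefect, p.retracts i hi k hk, sub_self]
  let S : Set K := ⋃ i ∈ p.frontier ∪ F, T i
  have : Finite S := (hp.union hF).biUnion fun i _ => (T i).finite_toSet
  obtain ⟨x, hx, hxS⟩ := exists_linearCombination_eq_of_tensorProduct (B := B)
    (v := fun k : S => D k) (y := fun k => defect k) (z := defect.lTensor B ∘ r) fun k => by
      rw [← Finsupp.apply_linearCombination, hr, LinearMap.lTensor_tmul]
  have hpx : Set.EqOn p.toFun (p.toFun + x) p.carrier := fun i hi => by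
    simp [hx i (hdefect_r i hi)]
  have hsolved (i : ι) (hi : i ∈ p.frontier ∪ F) (k : K) (hk : k ∈ T i) :
      Finsupp.linearCombination A (p.toFun + x) (D k) = k := by
    have hk' : Finsupp.linearCombination A x (D k) =
        k - Finsupp.linearCombination A p.toFun (D k) :=
      hxS ⟨k, Set.mem_biUnion hi hk⟩
    calc Finsupp.linearCombination A (p.toFun + x) (D k)
      _ = Finsupp.linearCombination A p.toFun (D k) + Finsupp.linearCombination A x (D k) := by
        simp only [Finsupp.linearCombination_apply, Pi.add_apply, smul_add, Finsupp.sum_add]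
      _ = k := by rw [hk', add_sub_cancel]
  refine ⟨⟨p.carrier ∪ F, p.toFun + x, fun i hi k hk => ?_⟩, ⟨Set.subset_union_left, hpx⟩, rfl⟩
  by_cases hi' : i ∈ p.frontier ∪ F
  · exact hsolved i hi' k hk
  · rw [Set.mem_union, not_or] at hi'
    have hip := hi.resolve_right hi'.2
    rw [← linearCombination_congr_of_mem_supported hpx
      (mem_supported_of_notMem_frontier hip hi'.1 hk), p.retracts i hip k hk]

theorem exists_le_frontier_finite (p : PartialRetraction D T) (hp : p.frontier.Finite) {F : Set ι}
    (hF : F.Finite) :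
    ∃ q, p ≤ q ∧ q.frontier.Finite ∧ F ⊆ q.carrier ∧
      ∀ i ∈ p.carrier, ∀ k ∈ T i, D k ∈ Finsupp.supported A A q.carrier := by
  let E : Set ι := ⋃ i ∈ p.frontier, ⋃ k ∈ T i, (D k).support
  have hE : E.Finite :=
    hp.biUnion fun i _ => (T i).finite_toSet.biUnion fun k _ => (D k).support.finite_toSet
  obtain ⟨q, hpq, hq⟩ := exists_le_carrier_eq_union hr hT p hp (hF.union hE)
  have hsupp (i : ι) (hi : i ∈ p.carrier) (k : K) (hk : k ∈ T i) :
      D k ∈ Finsupp.supported A A q.carrier := by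
    by_cases hi' : i ∈ p.frontier
    · rw [Finsupp.mem_supported, hq]
      exact fun j hj => Or.inr <| Or.inr <| Set.mem_biUnion hi' <| Set.mem_biUnion hk hj
    · exact Finsupp.supported_mono hpq.1 (mem_supported_of_notMem_frontier hi hi' hk)
  refine ⟨q, hpq, (hF.union hE).subset fun i ⟨hi, k, hk, hDk⟩ => ?_, ?_, hsupp⟩
  · rw [hq] at hi
    exact hi.resolve_left fun hip => hDk (hsupp i hip k hk)
  · rw [hq]
    exact Set.subset_union_left.trans Set.subset_union_right

theorem exists_le_frontier_eq_empty (p : PartialRetraction D T) (hp : p.frontier = ∅) (i : ι) :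
    ∃ q, p ≤ q ∧ q.frontier = ∅ ∧ i ∈ q.carrier := by
  have hnext (q : {q : PartialRetraction D T // q.frontier.Finite}) :
      ∃ q' : {q : PartialRetraction D T // q.frontier.Finite}, q.1 ≤ q'.1 ∧ i ∈ q'.1.carrier ∧
        ∀ j ∈ q.1.carrier, ∀ k ∈ T j, D k ∈ Finsupp.supported A A q'.1.carrier := by
    obtain ⟨q', hle, hfin, hi, hsupp⟩ :=
      exists_le_frontier_finite hr hT q.1 q.2 (Set.finite_singleton i)
    exact ⟨⟨q', hfin⟩, hle, hi rfl, hsupp⟩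
  choose next hle hi hsupp using hnext
  let u (n : ℕ) : PartialRetraction D T := (next^[n] ⟨p, hp ▸ Set.finite_empty⟩).1
  have hu (n : ℕ) : u (n + 1) = (next (next^[n] ⟨p, hp ▸ Set.finite_empty⟩)).1 := by
    simp only [u, Function.iterate_succ_apply']
  have hmono : Monotone u := monotone_nat_of_le_succ fun n => (hle _).trans_eq (hu n).symm
  obtain ⟨m, hm, hum⟩ := exists_frontier_eq_empty_of_directedOn
    hmono.directed_le.directedOn_range <| by
      rintro - ⟨n, rfl⟩
      exact ⟨u (n + 1), ⟨n + 1, rfl⟩, by rw [hu]; exact hsupp _⟩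
  exact ⟨m, hum _ ⟨0, rfl⟩, hm, (hum _ ⟨1, rfl⟩).1 (hi _)⟩

theorem exists_carrier_eq_univ : ∃ p : PartialRetraction D T, p.carrier = Set.univ := by
  obtain ⟨m, hm⟩ := zorn_le₀ {p : PartialRetraction D T | p.frontier = ∅} fun c hc hchain =>
    exists_frontier_eq_empty_of_directedOn hchain.directedOn fun p hp =>
      ⟨p, hp, fun i hi k hk => mem_supported_of_notMem_frontier hi (hc hp ▸ Set.notMem_empty i) hk⟩
  refine ⟨m, Set.eq_univ_of_forall fun i => ?_⟩
  obtain ⟨q, hmq, hq, hi⟩ := exists_le_frontier_eq_empty hr hT m hm.prop i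
  exact (hm.le_of_ge hq hmq).1 hi

end FaithfullyFlat

end PartialRetraction

section Retraction

variable {A B : Type*} [CommRing A] [Ring B] [Algebra A B]

theorem exists_finset_forall_lTensor_eq_zero {N P : Type*} [AddCommGroup N] [Module A N]
    [AddCommGroup P] [Module A P] (t : B ⊗[A] N) :
    ∃ T : Finset N, ∀ y : N →ₗ[A] P, (∀ k ∈ T, y k = 0) → y.lTensor B t = 0 := by
  classical
  obtain ⟨S, rfl⟩ := TensorProduct.exists_finset t
  refine ⟨S.image Prod.snd, fun y hy => ?_⟩
  rw [map_sum]
  refine Finset.sum_eq_zero fun q hq => ?_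
  rw [LinearMap.lTensor_tmul, hy _ (Finset.mem_image_of_mem _ hq), TensorProduct.tmul_zero]

variable [Module.FaithfullyFlat A B]

theorem exists_linearCombination_comp_eq_id {K ι : Type*} [AddCommGroup K] [Module A K]
    {D : K →ₗ[A] ι →₀ A} {r : ι → B ⊗[A] K}
    (hr : ∀ k, Finsupp.linearCombination A r (D k) = 1 ⊗ₜ k) :
    ∃ s : ι → K, Finsupp.linearCombination A s ∘ₗ D = LinearMap.id := by
  choose T hT using fun i => exists_finset_forall_lTensor_eq_zero (P := K) (r i)
  obtain ⟨p, hp⟩ := PartialRetraction.exists_carrier_eq_univ hr hT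
  refine ⟨p.toFun, LinearMap.ext fun k => ?_⟩
  let defect : K →ₗ[A] K := LinearMap.id - Finsupp.linearCombination A p.toFun ∘ₗ D
  have hdefect_r : defect.lTensor B ∘ r = 0 := funext fun i => hT i defect fun k hk => by
    simp [defect, p.retracts i (hp ▸ Set.mem_univ i) k hk]
  have hdefect_k : (1 : B) ⊗ₜ[A] defect k = 0 := by
    rw [← LinearMap.lTensor_tmul, ← hr, Finsupp.apply_linearCombination, hdefect_r,
      Finsupp.linearCombination_zero, LinearMap.zero_apply]
  rw [Module.FaithfullyFlat.one_tmul_eq_zero_iff] at hdefect_k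
  exact (sub_eq_zero.1 hdefect_k).symm

theorem exists_leftInverse_of_lTensor {K F : Type*} [AddCommGroup K] [Module A K]
    [AddCommGroup F] [Module A F] [Module.Projective A F] {D : K →ₗ[A] F}
    {ρ : B ⊗[A] F →ₗ[A] B ⊗[A] K} (hρ : ρ ∘ₗ D.lTensor B = LinearMap.id) :
    ∃ l : F →ₗ[A] K, l ∘ₗ D = LinearMap.id := by
  obtain ⟨σ, hσ⟩ := Module.projective_def'.1 (inferInstance : Module.Projective A F)
  obtain ⟨s, hs⟩ := exists_linearCombination_comp_eq_id (D := σ ∘ₗ D)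
    (r := fun f => ρ (1 ⊗ₜ f)) fun k => by
      let ρ₁ : F →ₗ[A] B ⊗[A] K := ρ ∘ₗ TensorProduct.mk A B F 1
      calc Finsupp.linearCombination A (ρ₁ ∘ id) (σ (D k))
        _ = ρ₁ (Finsupp.linearCombination A id (σ (D k))) :=
          (Finsupp.apply_linearCombination A ρ₁ id _).symm
        _ = ρ (D.lTensor B (1 ⊗ₜ k)) := congrArg ρ₁ (LinearMap.congr_fun hσ (D k))
        _ = 1 ⊗ₜ k := LinearMap.congr_fun hρ _
  exact ⟨Finsupp.linearCombination A s ∘ₗ σ, hs⟩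

end Retraction

section BaseChange

variable {A : Type*} (B : Type*) [CommRing A] [Ring B] [Algebra A B]
  {L M N : Type*} [AddCommGroup L] [Module A L] [AddCommGroup M] [Module A M]
  [AddCommGroup N] [Module A N] {f : L →ₗ[A] M} {g : M →ₗ[A] N}

theorem injective_baseChange [Module.Flat A B] (hf : Function.Injective f) :
    Function.Injective (f.baseChange B) :=
  Module.Flat.lTensor_preserves_injective_linearMap f hf

theorem exact_baseChange (hfg : Function.Exact f g) (hg : Function.Surjective g) :
    Function.Exact (f.baseChange B) (g.baseChange B) :=
  lTensor_exact B hfg hg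

end BaseChange

section ShortExact

variable {R : Type*} [Ring R] {K F M : Type*} [AddCommGroup K] [Module R K]
  [AddCommGroup F] [Module R F] [Module.Projective R F] [AddCommGroup M] [Module R M]
  {j : K →ₗ[R] F} {g : F →ₗ[R] M}

theorem projective_iff_exists_leftInverse_of_exact (hj : Function.Injective j)
    (hjg : Function.Exact j g) (hg : Function.Surjective g) :
    Module.Projective R M ↔ ∃ l : F →ₗ[R] K, l ∘ₗ j = LinearMap.id :=
  (Module.Projective.iff_split_of_projective g hg).trans
    ((Function.Exact.split_tfae hjg hj hg).out 0 1)

end ShortExact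

section Projective

variable {A : Type*} (B : Type*) [CommRing A] [Ring B] [Algebra A B]
  [Module.FaithfullyFlat A B] {K F M : Type*} [AddCommGroup K] [Module A K]
  [AddCommGroup F] [Module A F] [Module.Projective A F] [AddCommGroup M] [Module A M]

theorem projective_baseChange_iff_of_exact {j : K →ₗ[A] F} {g : F →ₗ[A] M}
    (hj : Function.Injective j) (hjg : Function.Exact j g) (hg : Function.Surjective g) :
    Module.Projective B (B ⊗[A] M) ↔ Module.Projective A M := by
  refine ⟨fun hproj => ?_, fun _ => inferInstance⟩
  obtain ⟨ρ, hρ⟩ := (projective_iff_exists_leftInverse_of_exact (injective_baseChange B hj)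
    (exact_baseChange B hjg hg) (LinearMap.baseChange_surjective B hg)).1 hproj
  exact (projective_iff_exists_leftInverse_of_exact hj hjg hg).2
    (exists_leftInverse_of_lTensor (ρ := ρ.restrictScalars A)
      (LinearMap.ext fun t => LinearMap.congr_fun hρ t))

theorem projective_baseChange_iff :
    Module.Projective B (B ⊗[A] M) ↔ Module.Projective A M :=
  projective_baseChange_iff_of_exact B (LinearMap.ker _).subtype_injective
    (LinearMap.exact_subtype_ker_map _) (Finsupp.linearCombination_id_surjective A M)

end Projective

section ProjectiveDimension

theorem hasProjectiveDimensionLE_succ_iff_of_exact {R K F M : Type u} [Ring R] [AddCommGroup K]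
    [Module R K] [AddCommGroup F] [Module R F] [Module.Projective R F] [AddCommGroup M] [Module R M]
    {j : K →ₗ[R] F} {g : F →ₗ[R] M} (hj : Function.Injective j) (hjg : Function.Exact j g)
    (hg : Function.Surjective g) (n : ℕ) :
    HasProjectiveDimensionLE (ModuleCat.of R M) (n + 1) ↔
      HasProjectiveDimensionLE (ModuleCat.of R K) n :=
  (ModuleCat.shortComplex_shortExact
    (ModuleCat.shortComplexOfCompEqZero j g hjg.linearMap_comp_eq_zero) hjg hj hg
      ).hasProjectiveDimensionLT_X₃_iff n ((IsProjective.iff_projective F).1 inferInstance)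

variable {A : Type u} (B : Type u) [CommRing A] [Ring B] [Algebra A B]
  {K F M : Type u} [AddCommGroup K] [Module A K] [AddCommGroup F] [Module A F]
  [Module.Projective A F] [AddCommGroup M] [Module A M] {j : K →ₗ[A] F} {g : F →ₗ[A] M}

theorem hasProjectiveDimensionLE_baseChange_succ_iff_of_exact [Module.Flat A B]
    (hj : Function.Injective j) (hjg : Function.Exact j g) (hg : Function.Surjective g) (n : ℕ) :
    HasProjectiveDimensionLE (ModuleCat.of B (B ⊗[A] M)) (n + 1) ↔
      HasProjectiveDimensionLE (ModuleCat.of B (B ⊗[A] K)) n :=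
  hasProjectiveDimensionLE_succ_iff_of_exact (injective_baseChange B hj)
    (exact_baseChange B hjg hg) (LinearMap.baseChange_surjective B hg) n

theorem hasProjectiveDimensionLE_baseChange_iff [Module.FaithfullyFlat A B] (n : ℕ)
    (M : Type u) [AddCommGroup M] [Module A M] :
    HasProjectiveDimensionLE (ModuleCat.of B (B ⊗[A] M)) n ↔
      HasProjectiveDimensionLE (ModuleCat.of A M) n := by
  induction n generalizing M with
  | zero =>
    simp only [← projective_iff_hasProjectiveDimensionLE_zero, ← IsProjective.iff_projective]
    exact projective_baseChange_iff B
  | succ n ih =>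
    let g : (M →₀ A) →ₗ[A] M := Finsupp.linearCombination A id
    have hj := (LinearMap.ker g).subtype_injective
    have hjg := g.exact_subtype_ker_map
    have hg : Function.Surjective g := Finsupp.linearCombination_id_surjective A M
    exact (hasProjectiveDimensionLE_baseChange_succ_iff_of_exact B (K := LinearMap.ker g)
      hj hjg hg n).trans <| (ih (LinearMap.ker g)).trans
        (hasProjectiveDimensionLE_succ_iff_of_exact (K := LinearMap.ker g) hj hjg hg n).symm

end ProjectiveDimension

section Ext

variable (A : Type u) [CommRing A] (M : ModuleCat.{u} A)

theorem subsingleton_extGroup_succ_iff (N : ModuleCat.{u} A) (p : ℕ) :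
    Subsingleton (extGroup A M N (p + 1)) ↔ ∀ e : Abelian.Ext.{u} M N (p + 1), e = 0 := by
  let P := ProjectiveResolution.of M
  have hcocycle : Subsingleton (extGroup A M N (p + 1)) ↔
      ∀ f : P.complex.X (p + 1) ⟶ N, P.complex.d (p + 2) (p + 1) ≫ f = 0 →
        ∃ g : P.complex.X p ⟶ N, P.complex.d (p + 1) p ≫ g = f := by
    rw [← ModuleCat.isZero_iff_subsingleton, (P.isoExt (R := A) (p + 1) N).isZero_iff,
      ← HomologicalComplex.exactAt_iff_isZero_homology,
      HomologicalComplex.exactAt_iff' _ p (p + 1) (p + 2) (by simp) (by simp),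
      ShortComplex.moduleCat_exact_iff]
    rfl
  rw [hcocycle]
  constructor
  · intro h e
    obtain ⟨f, hf, rfl⟩ := P.extMk_surjective e (p + 2) rfl
    exact (P.extMk_eq_zero_iff f (p + 2) rfl hf p rfl).2 (h f hf)
  · intro h f hf
    exact (P.extMk_eq_zero_iff f (p + 2) rfl hf p rfl).1 (h _)

theorem forall_subsingleton_extGroup_iff (n : ℕ) :
    (∀ (N : ModuleCat.{u} A) (i : ℕ), (n : ℕ∞) < i → Subsingleton (extGroup A M N i)) ↔
      HasProjectiveDimensionLE M n := by
  rw [HasProjectiveDimensionLE, hasProjectiveDimensionLT_iff.{u}]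
  constructor
  · rintro h (_ | p) hp N
    · omega
    · exact (subsingleton_extGroup_succ_iff A M N p).1 (h N (p + 1) (by exact_mod_cast hp))
  · rintro h N (_ | p) hp
    · simp at hp
    · exact (subsingleton_extGroup_succ_iff A M N p).2 fun e => h (p + 1) (by exact_mod_cast hp) e

end Ext

theorem projDim_tensorProduct_of_faithfullyFlat_general
    (A : Type u) [CommRing A] (B : Type u) [CommRing B] [Algebra A B]
    [Module.FaithfullyFlat A B]
    (M : Type u) [AddCommGroup M] [Module A M] :
    projDim B (ModuleCat.of B (TensorProduct A B M)) = projDim A (ModuleCat.of A M) := by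
  refine congrArg sInf (Set.ext fun n => ?_)
  induction n using ENat.recTopCoe with
  | top => simp
  | coe n =>
    exact (forall_subsingleton_extGroup_iff B _ n).trans <|
      (hasProjectiveDimensionLE_baseChange_iff B n M).trans
        (forall_subsingleton_extGroup_iff A _ n).symm

theorem projDim_tensorProduct_of_faithfullyFlat
    (A : Type u) [CommRing A] (B : Type u) [CommRing B] [Algebra A B]
    [Module.FaithfullyFlat A B]
    (M : Type u) [AddCommGroup M] [Module A M]
    (hM : projDim A (ModuleCat.of A M) ≠ ⊤) :
    projDim B (ModuleCat.of B (TensorProduct A B M)) = projDim A (ModuleCat.of A M) :=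
  projDim_tensorProduct_of_faithfullyFlat_general A B M
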